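/- If S | F1 ~ S | F2 and S ⫫ Fi for i = 1, 2, then F1 ~ F2. -/

import Mathlib

namespace CCS

/-- Process terms over a set of actions `A`. -/
inductive Proc (A : Type) where
  | nil : Proc A
  | pre : A → Proc A → Proc A
  | par : Proc A → Proc A → Proc A
  | repl : A → Proc A → Proc A

namespace Proc

/-- Finite processes: no occurrence of replication. -/
def IsFin {A : Type} : Proc A → Prop
  | nil => True
  | pre _ p => IsFin p
  | par p q => IsFin p ∧ IsFin q
  | repl _ _ => False

/-- Processes of the calculus: replication is applied only to prefixed
finite processes, at top level. -/
def Wf {A : Type} : Proc A → Prop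
  | nil => True
  | pre _ p => IsFin p
  | par p q => Wf p ∧ Wf q
  | repl _ p => IsFin p

/-- Size: the number of prefixes. -/
def size {A : Type} : Proc A → ℕ
  | nil => 0
  | pre _ p => size p + 1
  | par p q => size p + size q
  | repl _ p => size p + 1

/-- `reps n p` is the parallel composition of `n` copies of `p`. -/
def reps {A : Type} : ℕ → Proc A → Proc A
  | 0, _ => nil
  | n+1, p => par p (reps n p)

/-- `bang F` is `!F`: for `F = α₁.F₁ | ... | αk.Fk` it is `!α₁.F₁ | ... | !αk.Fk`. -/
def bang {A : Type} : Proc A → Proc A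
  | nil => nil
  | pre a p => repl a p
  | par p q => par (bang p) (bang q)
  | repl a p => repl a p

end Proc

/-- The labelled transition system (no synchronisation). -/
inductive Step {A : Type} : Proc A → A → Proc A → Prop where
  | pre {a : A} {p : Proc A} : Step (Proc.pre a p) a p
  | repl {a : A} {p : Proc A} :
      Step (Proc.repl a p) a (Proc.par (Proc.repl a p) p)
  | parL {p : Proc A} {a : A} {p' : Proc A} (q : Proc A) :
      Step p a p' → Step (Proc.par p q) a (Proc.par p' q)
  | parR {q : Proc A} {a : A} {q' : Proc A} (p : Proc A) :
      Step q a q' → Step (Proc.par p q) a (Proc.par p q')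

/-- Strong bisimulations. -/
def IsBisim {A : Type} (R : Proc A → Proc A → Prop) : Prop :=
  Symmetric R ∧
    ∀ p q, R p q → ∀ a p', Step p a p' → ∃ q', Step q a q' ∧ R p' q'

/-- Strong bisimilarity `~`: the greatest strong bisimulation. -/
def Bisim {A : Type} (p q : Proc A) : Prop :=
  ∃ R, IsBisim R ∧ R p q

/-- The congruence `≡D`: the smallest congruence generated by the abelian
monoid laws for parallel composition (neutral element `0`) and the
distribution law `α.(F | α.F | ... | α.F) = α.F | α.F | ... | α.F`
(with as many occurrences of `F` on both sides). -/
inductive EqD {A : Type} : Proc A → Proc A → Prop where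
  | refl (p : Proc A) : EqD p p
  | symm {p q : Proc A} : EqD p q → EqD q p
  | trans {p q r : Proc A} : EqD p q → EqD q r → EqD p r
  | parComm (p q : Proc A) : EqD (Proc.par p q) (Proc.par q p)
  | parAssoc (p q r : Proc A) :
      EqD (Proc.par (Proc.par p q) r) (Proc.par p (Proc.par q r))
  | parNil (p : Proc A) : EqD (Proc.par p Proc.nil) p
  | distr (a : A) (F : Proc A) (n : ℕ) (hF : F.IsFin) :
      EqD (Proc.pre a (Proc.par F (Proc.reps n (Proc.pre a F))))
          (Proc.reps (n + 1) (Proc.pre a F))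
  | congPre (a : A) {p q : Proc A} : EqD p q → EqD (Proc.pre a p) (Proc.pre a q)
  | congPar {p p' q q' : Proc A} :
      EqD p p' → EqD q q' → EqD (Proc.par p q) (Proc.par p' q')
  | congRepl (a : A) {p q : Proc A} : EqD p q → EqD (Proc.repl a p) (Proc.repl a q)

/-- Finite (single-hole) contexts `D ::= [] | α.D | D|F`. -/
inductive FCtx (A : Type) where
  | hole : FCtx A
  | pre : A → FCtx A → FCtx A
  | par : FCtx A → Proc A → FCtx A

/-- Filling the hole of a finite context. -/
def FCtx.fill {A : Type} : FCtx A → Proc A → Proc A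
  | .hole, p => p
  | .pre a d, p => Proc.pre a (d.fill p)
  | .par d f, p => Proc.par (d.fill p) f

/-- Well-formedness of a finite context: the processes placed in parallel
are finite. -/
def FCtx.Wf {A : Type} : FCtx A → Prop
  | .hole => True
  | .pre _ d => d.Wf
  | .par d f => d.Wf ∧ f.IsFin

/-- Single-hole contexts `C ::= D | !α.D | C|P` (the hole never occurs
directly under a replication). -/
inductive Ctx (A : Type) where
  | ofD : FCtx A → Ctx A
  | repl : A → FCtx A → Ctx A
  | par : Ctx A → Proc A → Ctx A

/-- Filling the hole of a context. -/
def Ctx.fill {A : Type} : Ctx A → Proc A → Proc A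
  | .ofD d, p => d.fill p
  | .repl a d, p => Proc.repl a (d.fill p)
  | .par c q, p => Proc.par (c.fill p) q

/-- Well-formedness of a context. -/
def Ctx.Wf {A : Type} : Ctx A → Prop
  | .ofD d => d.Wf
  | .repl _ d => d.Wf
  | .par c p => c.Wf ∧ p.Wf

/-- `k` consecutive transitions. -/
inductive NSteps {A : Type} : Proc A → ℕ → Proc A → Prop where
  | zero (p : Proc A) : NSteps p 0 p
  | succ {p : Proc A} {a : A} {p' : Proc A} {k : ℕ} {q : Proc A} :
      Step p a p' → NSteps p' k q → NSteps p (k + 1) q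

/-- `P ⇒k Q`: `k` transitions from `P` reach a process `≡D Q`. -/
def Reduct {A : Type} (p : Proc A) (k : ℕ) (q : Proc A) : Prop :=
  ∃ p', NSteps p k p' ∧ EqD p' q

/-- `TopRepl S a G` holds when `!a.G` is one of the (top-level) replicated
parallel components of `S`. -/
inductive TopRepl {A : Type} : Proc A → A → Proc A → Prop where
  | repl (a : A) (p : Proc A) : TopRepl (Proc.repl a p) a p
  | parL {p : Proc A} {a : A} {r : Proc A} (q : Proc A) :
      TopRepl p a r → TopRepl (Proc.par p q) a r
  | parR {q : Proc A} {a : A} {r : Proc A} (p : Proc A) :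
      TopRepl q a r → TopRepl (Proc.par p q) a r

/-- `S` has only replicated components: `S = ∏i !αi.Si`. -/
def ReplOnly {A : Type} : Proc A → Prop
  | .nil => True
  | .pre _ _ => False
  | .par p q => ReplOnly p ∧ ReplOnly q
  | .repl _ p => p.IsFin

/-- `S ⫫ F` : for no component `!αi.Si` of `S` and no `k` do we have
`F ⇒k αi.Si`. -/
def Dis {A : Type} (S F : Proc A) : Prop :=
  ∀ a G, TopRepl S a G → ∀ k, ¬ Reduct F k (Proc.pre a G)

/-- `S ▷ R` : there is `k > 0` with `S ⇒k S | R`. -/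
def Purg {A : Type} (S R : Proc A) : Prop :=
  ∃ k, 0 < k ∧ Reduct S k (Proc.par S R)

/-- A process is a seed if no (well-formed) process of strictly smaller
size is bisimilar to it. -/
def IsSeed {A : Type} (p : Proc A) : Prop :=
  p.Wf ∧ ∀ q : Proc A, q.Wf → Bisim q p → p.size ≤ q.size

/-- The rewriting relation `⤳_T` (first argument), defined modulo `≡D` by
the axioms (B1) `C[α.F] ⤳_{!α.F|F'} C[0]` and (B2) `!α.F | !α.F | P ⤳_Q !α.F | P`. -/
inductive Rw {A : Type} : Proc A → Proc A → Proc A → Prop where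
  | B1 {a : A} {F F' : Proc A} (C : Ctx A) :
      F.IsFin → F'.Wf → C.Wf →
      Rw (Proc.par (Proc.repl a F) F') (C.fill (Proc.pre a F)) (C.fill Proc.nil)
  | B2 {a : A} {F P Q : Proc A} :
      F.IsFin → P.Wf → Q.Wf →
      Rw Q (Proc.par (Proc.repl a F) (Proc.par (Proc.repl a F) P))
           (Proc.par (Proc.repl a F) P)
  | eqD {T T' P P' Q Q' : Proc A} :
      EqD T T' → EqD P P' → Rw T' P' Q' → EqD Q Q' → Rw T P Q

/-- `⤳*_T` : the reflexive transitive closure of `⤳_T`. -/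
def RwStar {A : Type} (T : Proc A) : Proc A → Proc A → Prop :=
  Relation.ReflTransGen (Rw T)

/-- Convertibility `P ⋈ Q`: some process `T` satisfies `P ⤳*_T T` and `Q ⤳*_T T`. -/
def Convert {A : Type} (P Q : Proc A) : Prop :=
  ∃ T : Proc A, T.Wf ∧ RwStar T P T ∧ RwStar T Q T

/-- `∏i αi.Fi` for a list of prefixed components. -/
def prodPre {A : Type} (l : List (A × Proc A)) : Proc A :=
  (l.map fun x => Proc.pre x.1 x.2).foldr Proc.par Proc.nil

/-- `∏i !αi.Fi` for a list of prefixed components. -/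
def bangProd {A : Type} (l : List (A × Proc A)) : Proc A :=
  (l.map fun x => Proc.repl x.1 x.2).foldr Proc.par Proc.nil

end CCS

namespace CCS


structure PAlg {M A : Type} [AddCommMonoid M] (sz : M → ℕ) (st : M → A → M → Prop) : Prop where
  sz_add : ∀ x y, sz (x + y) = sz x + sz y
  sz_zero : ∀ x, sz x = 0 ↔ x = 0
  st_sz : ∀ x a y, st x a y → sz y + 1 = sz x
  ex_st : ∀ x, x ≠ 0 → ∃ a y, st x a y
  st_add : ∀ x y a z, st (x + y) a z ↔
    (∃ x', st x a x' ∧ z = x' + y) ∨ (∃ y', st y a y' ∧ z = x + y')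
  ext : ∀ x y, (∀ a z, st x a z ↔ st y a z) → x = y

def Prm {M : Type} [AddCommMonoid M] (x : M) : Prop :=
  x ≠ 0 ∧ ∀ y z, x = y + z → y = 0 ∨ z = 0

namespace PAlg

variable {M A : Type} [AddCommMonoid M] {sz : M → ℕ} {st : M → A → M → Prop}

theorem pos (h : PAlg sz st) {x : M} (hx : x ≠ 0) : 0 < sz x :=
  Nat.pos_of_ne_zero fun h0 => hx ((h.sz_zero x).1 h0)

theorem sz0 (h : PAlg sz st) : sz 0 = 0 := (h.sz_zero 0).2 rfl

theorem mem_sz (h : PAlg sz st) {s : Multiset M} {x : M} (hx : x ∈ s) : sz x ≤ sz s.sum := by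
  obtain ⟨t, rfl⟩ := Multiset.exists_cons_of_mem hx
  rw [Multiset.sum_cons, h.sz_add]; omega

theorem exists_fac (h : PAlg sz st) : ∀ n (x : M), sz x = n →
    ∃ s : Multiset M, (∀ p ∈ s, Prm p) ∧ s.sum = x := by
  intro n
  induction n using Nat.strong_induction_on with
  | _ n ih =>
    intro x hx
    by_cases h0 : x = 0
    · exact ⟨0, by simp, by simp [h0]⟩
    by_cases hp : Prm x
    · exact ⟨{x}, by simpa using hp, by simp⟩
    · have : ∃ y z, x = y + z ∧ y ≠ 0 ∧ z ≠ 0 := by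
        by_contra hc
        push Not at hc
        exact hp ⟨h0, fun y z e => by
          by_cases hy : y = 0
          · exact Or.inl hy
          · exact Or.inr (hc y z e hy)⟩
      obtain ⟨y, z, rfl, hy, hz⟩ := this
      have := h.pos hy
      have := h.pos hz
      have := h.sz_add y z
      obtain ⟨s, hs, rfl⟩ := ih (sz y) (by omega) y rfl
      obtain ⟨t, ht, rfl⟩ := ih (sz z) (by omega) z rfl
      refine ⟨s + t, ?_, by simp⟩
      intro p hp
      rcases Multiset.mem_add.1 hp with hp | hp
      · exact hs p hp
      · exact ht p hp

theorem sum_ne (h : PAlg sz st) {s : Multiset M} (hs : ∀ p ∈ s, Prm p) (h0 : s.sum = 0) : s = 0 := by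
  by_contra hne
  obtain ⟨x, hx⟩ := Multiset.exists_mem_of_ne_zero hne
  have h1 := h.mem_sz hx
  have h2 := h.pos (hs x hx).1
  rw [h0, h.sz0] at h1
  omega

theorem st_sum (h : PAlg sz st) [DecidableEq M] {s : Multiset M} {a : A} {z : M} :
    st s.sum a z ↔ ∃ Y ∈ s, ∃ Y', st Y a Y' ∧ z = (s.erase Y).sum + Y' := by
  constructor
  · induction s using Multiset.induction_on generalizing z with
    | empty =>
      intro hst
      have := h.st_sz _ _ _ hst
      rw [Multiset.sum_zero, h.sz0] at this
      omega
    | cons x s ih =>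
      intro hst
      rw [Multiset.sum_cons] at hst
      rcases (h.st_add _ _ _ _).1 hst with ⟨x', hx, rfl⟩ | ⟨y', hy, rfl⟩
      · exact ⟨x, by simp, x', hx, by simp [add_comm]⟩
      · obtain ⟨Y, hY, Y', hst', rfl⟩ := ih hy
        refine ⟨Y, by simp [hY], Y', hst', ?_⟩
        rw [Multiset.erase_cons_tail_of_mem hY, Multiset.sum_cons, add_assoc]
  · rintro ⟨Y, hY, Y', hst, rfl⟩
    have : s.sum = (s.erase Y).sum + Y := by
      conv_lhs => rw [← Multiset.cons_erase hY]
      rw [Multiset.sum_cons, add_comm]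
    rw [this]
    exact (h.st_add _ _ _ _).2 (Or.inr ⟨Y', hst, rfl⟩)

theorem uf (h : PAlg sz st) : ∀ n (s t : Multiset M), (∀ p ∈ s, Prm p) → (∀ p ∈ t, Prm p) →
    s.sum = t.sum → sz s.sum = n → s = t := by
  classical
  intro n
  induction n using Nat.strong_induction_on with
  | _ n ih =>
    choose fac hfacP hfacS using fun x : M => h.exists_fac (sz x) x rfl
    have hcount : ∀ (s : Multiset M) (X Y Y' : M) (a : A), (∀ p ∈ s, Prm p) → sz s.sum = n →
        Y ∈ s → st Y a Y' →
        (fac ((s.erase Y).sum + Y')) = (s.erase Y) + (fac Y') := by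
      intro s X Y Y' a hs hn hY hst
      have h1 := h.st_sz _ _ _ ((h.st_sum (s := s) (a := a)).2 ⟨Y, hY, Y', hst, rfl⟩)
      refine ih (sz ((s.erase Y).sum + Y')) (by omega) _ _ (hfacP _) ?_ ?_ (by rw [hfacS])
      · intro p hp
        rcases Multiset.mem_add.1 hp with hp | hp
        · exact hs p (Multiset.mem_of_mem_erase hp)
        · exact hfacP _ p hp
      · rw [hfacS, Multiset.sum_add, hfacS]
    have hsmall : ∀ (X Y Y' : M) (a : A), st Y a Y' → sz Y ≤ sz X → (fac Y').count X = 0 := by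
      intro X Y Y' a hst hle
      rw [Multiset.count_eq_zero]
      intro hmem
      have h1 := h.mem_sz hmem
      rw [hfacS] at h1
      have := h.st_sz _ _ _ hst
      omega
    have core : ∀ (s t : Multiset M) (X : M), (∀ p ∈ s, Prm p) → (∀ p ∈ t, Prm p) →
        s.sum = t.sum → sz s.sum = n → t.count X < s.count X →
        (∀ Y, sz X < sz Y → s.count Y = t.count Y) → False := by
      intro s t X hs ht hst hn hlt hbig
      have hnt : sz t.sum = n := by rw [← hst]; exact hn
      have hXs : X ∈ s := Multiset.count_pos.1 (by omega)
      have step : ∀ Y ∈ s, ∀ a Y', st Y a Y' → ∃ Z ∈ t, ∃ Z', st Z a Z' ∧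
          (s.erase Y).count X + (fac Y').count X = (t.erase Z).count X + (fac Z').count X := by
        intro Y hY a Y' hm
        have h1 := (h.st_sum (s := s) (a := a)).2 ⟨Y, hY, Y', hm, rfl⟩
        rw [hst] at h1
        obtain ⟨Z, hZ, Z', hm', e⟩ := h.st_sum.1 h1
        refine ⟨Z, hZ, Z', hm', ?_⟩
        have e1 := hcount s X Y Y' a hs hn hY hm
        have e2 := hcount t X Z Z' a ht hnt hZ hm'
        rw [e, e2] at e1
        have := congrArg (Multiset.count X) e1
        simp only [Multiset.count_add] at this
        omega
      have step' : ∀ Y ∈ t, ∀ a Y', st Y a Y' → ∃ Z ∈ s, ∃ Z', st Z a Z' ∧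
          (t.erase Y).count X + (fac Y').count X = (s.erase Z).count X + (fac Z').count X := by
        intro Y hY a Y' hm
        have h1 := (h.st_sum (s := t) (a := a)).2 ⟨Y, hY, Y', hm, rfl⟩
        rw [← hst] at h1
        obtain ⟨Z, hZ, Z', hm', e⟩ := h.st_sum.1 h1
        refine ⟨Z, hZ, Z', hm', ?_⟩
        have e1 := hcount t X Y Y' a ht hnt hY hm
        have e2 := hcount s X Z Z' a hs hn hZ hm'
        rw [e, e2] at e1
        have := congrArg (Multiset.count X) e1
        simp only [Multiset.count_add] at this
        omega
      by_cases hA : ∃ Y ∈ s, sz X < sz Y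
      · skip
        let Pg : ℕ → Prop := fun g => ∃ Y ∈ s, sz X < sz Y ∧ ∃ a Y', st Y a Y' ∧ (fac Y').count X = g
        have hne : ∃ g, Pg g := by
          obtain ⟨Y, hY, hlt'⟩ := hA
          obtain ⟨a, Y', hm⟩ := h.ex_st Y (hs Y hY).1
          exact ⟨_, Y, hY, hlt', a, Y', hm, rfl⟩
        have hbd : ∃ B, ∀ g, Pg g → g ≤ B := by
          refine ⟨n, ?_⟩
          rintro g ⟨Y, hY, -, a, Y', hm, rfl⟩
          have h1 := h.mem_sz hY
          have h2 := h.st_sz _ _ _ hm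
          have h3 : ∀ u : Multiset M, (∀ p ∈ u, Prm p) → u.card ≤ sz u.sum := by
            intro u
            induction u using Multiset.induction_on with
            | empty => simp
            | cons x u ihu =>
              intro hu
              have := ihu fun p hp => hu p (by simp [hp])
              have := h.pos (hu x (by simp)).1
              rw [Multiset.sum_cons, h.sz_add, Multiset.card_cons]; omega
          have h4 := h3 (fac Y') (hfacP _)
          rw [hfacS] at h4
          have h5 := Multiset.count_le_card X (fac Y')
          omega
        obtain ⟨B, hB⟩ := hbd
        obtain ⟨g, hg, hmax⟩ : ∃ g, Pg g ∧ ∀ g', Pg g' → g' ≤ g := by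
          obtain ⟨g0, hg0⟩ := hne
          refine ⟨Nat.findGreatest Pg B, Nat.findGreatest_spec (hB _ hg0) hg0, ?_⟩
          intro g' hg'
          exact Nat.le_findGreatest (hB _ hg') hg'
        obtain ⟨Y, hY, hlt', a, Y', hm, hgY⟩ := hg
        obtain ⟨Z, hZ, Z', hm', e⟩ := step Y hY a Y' hm
        have hYX : X ≠ Y := by rintro rfl; omega
        rw [Multiset.count_erase_of_ne hYX] at e
        have hle : (t.erase Z).count X ≤ t.count X :=
          Multiset.count_le_of_le _ (Multiset.erase_le _ _)
        by_cases hZX : sz X < sz Z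
        · have hZs : Z ∈ s := by
            rw [← Multiset.count_pos, hbig Z hZX, Multiset.count_pos]; exact hZ
          have := hmax _ ⟨Z, hZs, hZX, a, Z', hm', rfl⟩
          omega
        · have := hsmall X Z Z' a hm' (by omega)
          omega
      · push Not at hA
        have hAt : ∀ Y ∈ t, sz Y ≤ sz X := by
          intro Y hY
          by_contra hc
          have : Y ∈ s := by
            rw [← Multiset.count_pos, hbig Y (by omega), Multiset.count_pos]; exact hY
          have := hA Y this
          omega
        by_cases hB1 : ∃ Y ∈ s, Y ≠ X
        · obtain ⟨Y, hY, hne⟩ := hB1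
          obtain ⟨a, Y', hm⟩ := h.ex_st Y (hs Y hY).1
          obtain ⟨Z, hZ, Z', hm', e⟩ := step Y hY a Y' hm
          rw [Multiset.count_erase_of_ne hne.symm] at e
          have hle : (t.erase Z).count X ≤ t.count X :=
            Multiset.count_le_of_le _ (Multiset.erase_le _ _)
          have := hsmall X Z Z' a hm' (hAt Z hZ)
          omega
        · push Not at hB1
          by_cases hXt : X ∈ t
          · obtain ⟨a, X', hm⟩ := h.ex_st X (hs X hXs).1
            obtain ⟨Z, hZ, Z', hm', e⟩ := step' X hXt a X' hm
            obtain rfl := hB1 Z hZ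
            rw [hsmall Z Z X' a hm le_rfl, hsmall Z Z Z' a hm' le_rfl,
              Multiset.count_erase_self, Multiset.count_erase_self] at e
            have := Multiset.count_pos.2 hXt
            omega
          · have ht0 : t ≠ 0 := by
              rintro rfl
              have := h.sum_ne hs (by simpa using hst)
              subst this
              simp at hXs
            obtain ⟨Y, hY⟩ := Multiset.exists_mem_of_ne_zero ht0
            obtain ⟨a, Y', hm⟩ := h.ex_st Y (ht Y hY).1
            obtain ⟨Z, hZ, Z', hm', e⟩ := step' Y hY a Y' hm
            obtain rfl := hB1 Z hZ
            rw [hsmall Z Y Y' a hm (hAt Y hY), hsmall Z Z Z' a hm' le_rfl,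
              Multiset.count_erase_self] at e
            have hle : (t.erase Y).count Z ≤ t.count Z :=
              Multiset.count_le_of_le _ (Multiset.erase_le _ _)
            have h0 : t.count Z = 0 := Multiset.count_eq_zero.2 hXt
            have h1 : s.count Z = 1 := by omega
            have hs1 : s = {Z} := by
              have h2 : s = Multiset.replicate s.card Z := Multiset.eq_replicate_card.2 hB1
              have h3 : s.count Z = s.card := by
                conv_lhs => rw [h2]
                simp
              rw [h2, ← h3, h1]; simp
            subst hs1
            rw [Multiset.sum_singleton] at hst
            have hc := Multiset.cons_erase hY
            rw [← hc, Multiset.sum_cons] at hst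
            rcases (hs Z hXs).2 _ _ hst with h5 | h5
            · exact (ht Y hY).1 h5
            · rw [h5, add_zero] at hst
              exact hXt (hst ▸ hY)
    intro s t hs ht hst hn
    by_contra hne
    have hex : ∃ X, s.count X ≠ t.count X := by
      by_contra hc
      push Not at hc
      exact hne (Multiset.ext.2 hc)
    obtain ⟨X, hX, hmax⟩ : ∃ X, s.count X ≠ t.count X ∧
        ∀ Y, sz X < sz Y → s.count Y = t.count Y := by
      let Q : ℕ → Prop := fun m => ∃ X, s.count X ≠ t.count X ∧ sz X = m
      have hb : ∀ m, Q m → m ≤ n := by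
        rintro m ⟨X, hX, rfl⟩
        by_cases hXs : X ∈ s
        · have := h.mem_sz hXs
          omega
        · by_cases hXt : X ∈ t
          · have := h.mem_sz hXt
            rw [← hst] at this
            omega
          · rw [Multiset.count_eq_zero.2 hXs, Multiset.count_eq_zero.2 hXt] at hX
            exact absurd rfl hX
      obtain ⟨X0, hX0⟩ := hex
      have hQ0 : Q (sz X0) := ⟨X0, hX0, rfl⟩
      obtain ⟨X, hX, e⟩ := Nat.findGreatest_spec (P := Q) (hb _ hQ0) hQ0
      refine ⟨X, hX, ?_⟩
      intro Y hY
      by_contra hc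
      have := Nat.le_findGreatest (P := Q) (hb _ ⟨Y, hc, rfl⟩) ⟨Y, hc, rfl⟩
      omega
    rcases lt_or_gt_of_ne hX with hl | hl
    · exact core t s X ht hs hst.symm (hst ▸ hn) hl fun Y hY => (hmax Y hY).symm
    · exact core s t X hs ht hst hn hl hmax

theorem cancel (h : PAlg sz st) {x y z : M} (e : x + z = y + z) : x = y := by
  obtain ⟨s, hs, rfl⟩ := h.exists_fac _ x rfl
  obtain ⟨t, ht, rfl⟩ := h.exists_fac _ y rfl
  obtain ⟨u, hu, rfl⟩ := h.exists_fac _ z rfl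
  have := h.uf _ (s + u) (t + u)
    (fun p hp => (Multiset.mem_add.1 hp).elim (hs p) (hu p))
    (fun p hp => (Multiset.mem_add.1 hp).elim (ht p) (hu p)) (by simpa using e) rfl
  rw [add_right_cancel this]

theorem pre_fac (h : PAlg sz st) (pr : A → M → M)
    (hpr : ∀ a x b z, st (pr a x) b z ↔ b = a ∧ z = x) (a : A) (x : M) :
    Prm (pr a x) ∨ ∃ (g : M) (n : ℕ), Prm (pr a g) ∧ x = g + n • pr a g := by
  classical
  obtain ⟨s, hs, e⟩ := h.exists_fac _ (pr a x) rfl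
  have hne : pr a x ≠ 0 := by
    intro h0
    have := h.st_sz _ _ _ ((hpr a x a x).2 ⟨rfl, rfl⟩)
    rw [h0, h.sz0] at this
    omega
  have hs0 : s ≠ 0 := by
    rintro rfl
    exact hne (by simpa using e.symm)
  obtain ⟨P, hP⟩ := Multiset.exists_mem_of_ne_zero hs0
  obtain ⟨r, rfl⟩ := Multiset.exists_cons_of_mem hP
  have hall : ∀ Q ∈ r, Q = P := by
    intro Q hQ
    obtain ⟨r', rfl⟩ := Multiset.exists_cons_of_mem hQ
    obtain ⟨b, P', hm⟩ := h.ex_st P (hs P hP).1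
    obtain ⟨c, Q', hm'⟩ := h.ex_st Q (hs Q (by simp)).1
    have e' : P + (Q + r'.sum) = pr a x := by simpa using e
    have h1 : st (pr a x) b (P' + (Q + r'.sum)) := by
      rw [← e']; exact (h.st_add _ _ _ _).2 (Or.inl ⟨_, hm, rfl⟩)
    have h2 : st (pr a x) c (P + (Q' + r'.sum)) := by
      rw [← e']
      exact (h.st_add _ _ _ _).2 (Or.inr ⟨_, (h.st_add _ _ _ _).2 (Or.inl ⟨_, hm', rfl⟩), rfl⟩)
    have h3 := ((hpr _ _ _ _).1 h1).2.trans ((hpr _ _ _ _).1 h2).2.symm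
    have h4 : P' + Q = P + Q' := by
      apply h.cancel (z := r'.sum)
      rw [add_assoc, h3, add_assoc]
    obtain ⟨u, hu, hu'⟩ := h.exists_fac _ P' rfl
    obtain ⟨v, hv, rfl⟩ := h.exists_fac _ Q' rfl
    have h5 := h.uf _ (u + {Q}) (P ::ₘ v)
      (fun p hp => (Multiset.mem_add.1 hp).elim (hu p)
        (fun hp => by rw [Multiset.mem_singleton.1 hp]; exact hs Q (by simp)))
      (fun p hp => (Multiset.mem_cons.1 hp).elim (fun hp => hp ▸ hs P hP) (hv p))
      (by simp [h4, hu']) rfl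
    have h6 : P ∈ u + {Q} := by rw [h5]; simp
    rcases Multiset.mem_add.1 h6 with h6 | h6
    · have h7 := h.mem_sz h6
      rw [hu'] at h7
      have := h.st_sz _ _ _ hm
      omega
    · exact (Multiset.mem_singleton.1 h6).symm
  obtain ⟨m, rfl⟩ : ∃ m, r = Multiset.replicate m P := ⟨_, Multiset.eq_replicate_card.2 hall⟩
  obtain ⟨b, g, hm⟩ := h.ex_st P (hs P hP).1
  have e' : P + m • P = pr a x := by simpa using e
  have key : ∀ c z, st P c z → c = a ∧ z + m • P = x := by
    intro c z hz
    have h1 : st (pr a x) c (z + m • P) := by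
      rw [← e']; exact (h.st_add _ _ _ _).2 (Or.inl ⟨_, hz, rfl⟩)
    exact ⟨((hpr _ _ _ _).1 h1).1, ((hpr _ _ _ _).1 h1).2⟩
  obtain ⟨rfl, hx⟩ := key _ _ hm
  have hPg : P = pr b g := by
    apply h.ext
    intro c z
    rw [hpr]
    constructor
    · intro hz
      obtain ⟨rfl, h2⟩ := key _ _ hz
      exact ⟨rfl, h.cancel (h2.trans hx.symm)⟩
    · rintro ⟨rfl, rfl⟩
      exact hm
  right
  refine ⟨g, m, hPg ▸ hs P hP, ?_⟩
  rw [← hPg, hx]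

end PAlg

end CCS

namespace CCS

variable {A : Type}


theorem Bisim.step {p q p' : Proc A} {a : A} (h : Bisim p q) (hs : Step p a p') :
    ∃ q', Step q a q' ∧ Bisim p' q' := by
  obtain ⟨R, hR, hpq⟩ := h
  obtain ⟨q', h1, h2⟩ := hR.2 _ _ hpq _ _ hs
  exact ⟨q', h1, R, hR, h2⟩

theorem Bisim.symm {p q : Proc A} (h : Bisim p q) : Bisim q p := by
  obtain ⟨R, hR, hpq⟩ := h
  exact ⟨R, hR, hR.1 hpq⟩

theorem Bisim.refl (p : Proc A) : Bisim p p :=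
  ⟨Eq, ⟨fun _ _ h => h.symm, by rintro p _ rfl a p' h; exact ⟨p', h, rfl⟩⟩, rfl⟩

theorem bisim_of (R : Proc A → Proc A → Prop)
    (h1 : ∀ p q, R p q → ∀ a p', Step p a p' → ∃ q', Step q a q' ∧ R p' q')
    (h2 : ∀ p q, R p q → ∀ a q', Step q a q' → ∃ p', Step p a p' ∧ R p' q')
    {p q : Proc A} (h : R p q) : Bisim p q := by
  refine ⟨fun x y => R x y ∨ R y x, ⟨?_, ?_⟩, Or.inl h⟩
  · rintro x y (h | h)
    · exact Or.inr h
    · exact Or.inl h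
  · rintro x y (h | h) a x' hs
    · obtain ⟨y', h3, h4⟩ := h1 _ _ h _ _ hs
      exact ⟨y', h3, Or.inl h4⟩
    · obtain ⟨y', h3, h4⟩ := h2 _ _ h _ _ hs
      exact ⟨y', h3, Or.inr h4⟩

theorem Bisim.trans {p q r : Proc A} (h : Bisim p q) (h' : Bisim q r) : Bisim p r := by
  refine bisim_of (fun x z => ∃ y, Bisim x y ∧ Bisim y z) ?_ ?_ ⟨q, h, h'⟩
  · rintro x z ⟨y, hxy, hyz⟩ a x' hs
    obtain ⟨y', h1, h2⟩ := hxy.step hs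
    obtain ⟨z', h3, h4⟩ := hyz.step h1
    exact ⟨z', h3, y', h2, h4⟩
  · rintro x z ⟨y, hxy, hyz⟩ a x' hs
    obtain ⟨y', h1, h2⟩ := hyz.symm.step hs
    obtain ⟨z', h3, h4⟩ := hxy.symm.step h1
    exact ⟨z', h3, y', h4.symm, h2.symm⟩

theorem bisim_upto (R : Proc A → Proc A → Prop)
    (h1 : ∀ p q, R p q → ∀ a p', Step p a p' →
      ∃ q', Step q a q' ∧ ∃ x y, Bisim p' x ∧ R x y ∧ Bisim y q')
    (h2 : ∀ p q, R p q → ∀ a q', Step q a q' →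
      ∃ p', Step p a p' ∧ ∃ x y, Bisim p' x ∧ R x y ∧ Bisim y q')
    {p q : Proc A} (h : R p q) : Bisim p q := by
  refine bisim_of (fun p q => ∃ x y, Bisim p x ∧ R x y ∧ Bisim y q) ?_ ?_
    ⟨p, q, Bisim.refl p, h, Bisim.refl q⟩
  · rintro p q ⟨x, y, hpx, hxy, hyq⟩ a p' hs
    obtain ⟨x', hx, e1⟩ := hpx.step hs
    obtain ⟨y', hy, u, v, e2, e3, e4⟩ := h1 _ _ hxy _ _ hx
    obtain ⟨q', hq, e5⟩ := hyq.step hy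
    exact ⟨q', hq, u, v, e1.trans e2, e3, e4.trans e5⟩
  · rintro p q ⟨x, y, hpx, hxy, hyq⟩ a q' hs
    obtain ⟨y', hy, e1⟩ := hyq.symm.step hs
    obtain ⟨x', hx, u, v, e2, e3, e4⟩ := h2 _ _ hxy _ _ hy
    obtain ⟨p', hp, e5⟩ := hpx.symm.step hx
    exact ⟨p', hp, u, v, e5.symm.trans e2, e3, e4.trans e1.symm⟩

theorem step_par {p q r : Proc A} {a : A} : Step (Proc.par p q) a r ↔
    (∃ p', Step p a p' ∧ r = Proc.par p' q) ∨ (∃ q', Step q a q' ∧ r = Proc.par p q') := by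
  constructor
  · intro h
    cases h with
    | parL _ h => exact Or.inl ⟨_, h, rfl⟩
    | parR _ h => exact Or.inr ⟨_, h, rfl⟩
  · rintro (⟨p', h, rfl⟩ | ⟨q', h, rfl⟩)
    · exact Step.parL _ h
    · exact Step.parR _ h

theorem step_pre {p r : Proc A} {a b : A} : Step (Proc.pre a p) b r ↔ b = a ∧ r = p := by
  constructor
  · intro h
    cases h
    exact ⟨rfl, rfl⟩
  · rintro ⟨rfl, rfl⟩
    exact Step.pre

theorem step_nil {r : Proc A} {a : A} : ¬ Step Proc.nil a r := by
  intro h; cases h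

theorem bisim_par {p p' q q' : Proc A} (h : Bisim p p') (h' : Bisim q q') :
    Bisim (Proc.par p q) (Proc.par p' q') := by
  refine bisim_of (fun x y => ∃ p p' q q', x = Proc.par p q ∧ y = Proc.par p' q' ∧
    Bisim p p' ∧ Bisim q q') ?_ ?_ ⟨p, p', q, q', rfl, rfl, h, h'⟩
  · rintro _ _ ⟨p, p', q, q', rfl, rfl, h, h'⟩ a r hs
    rcases step_par.1 hs with ⟨x, hx, rfl⟩ | ⟨x, hx, rfl⟩
    · obtain ⟨y, hy, e⟩ := h.step hx
      exact ⟨_, Step.parL _ hy, _, _, _, _, rfl, rfl, e, h'⟩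
    · obtain ⟨y, hy, e⟩ := h'.step hx
      exact ⟨_, Step.parR _ hy, _, _, _, _, rfl, rfl, h, e⟩
  · rintro _ _ ⟨p, p', q, q', rfl, rfl, h, h'⟩ a r hs
    rcases step_par.1 hs with ⟨x, hx, rfl⟩ | ⟨x, hx, rfl⟩
    · obtain ⟨y, hy, e⟩ := h.symm.step hx
      exact ⟨_, Step.parL _ hy, _, _, _, _, rfl, rfl, e.symm, h'⟩
    · obtain ⟨y, hy, e⟩ := h'.symm.step hx
      exact ⟨_, Step.parR _ hy, _, _, _, _, rfl, rfl, h, e.symm⟩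

theorem bisim_pre {p p' : Proc A} (a : A) (h : Bisim p p') :
    Bisim (Proc.pre a p) (Proc.pre a p') := by
  refine bisim_of (fun x y => Bisim x y ∨ (x = Proc.pre a p ∧ y = Proc.pre a p')) ?_ ?_
    (Or.inr ⟨rfl, rfl⟩)
  · rintro x y (hb | ⟨rfl, rfl⟩) b x' hs
    · obtain ⟨y', h1, h2⟩ := hb.step hs
      exact ⟨y', h1, Or.inl h2⟩
    · obtain ⟨rfl, rfl⟩ := step_pre.1 hs
      exact ⟨_, Step.pre, Or.inl h⟩
  · rintro x y (hb | ⟨rfl, rfl⟩) b x' hs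
    · obtain ⟨y', h1, h2⟩ := hb.symm.step hs
      exact ⟨y', h1, Or.inl h2.symm⟩
    · obtain ⟨rfl, rfl⟩ := step_pre.1 hs
      exact ⟨_, Step.pre, Or.inl h⟩

theorem bisim_comm (p q : Proc A) : Bisim (Proc.par p q) (Proc.par q p) := by
  refine bisim_of (fun x y => ∃ p q, x = Proc.par p q ∧ y = Proc.par q p) ?_ ?_
    ⟨p, q, rfl, rfl⟩
  · rintro _ _ ⟨p, q, rfl, rfl⟩ a r hs
    rcases step_par.1 hs with ⟨x, hx, rfl⟩ | ⟨x, hx, rfl⟩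
    · exact ⟨_, Step.parR _ hx, _, _, rfl, rfl⟩
    · exact ⟨_, Step.parL _ hx, _, _, rfl, rfl⟩
  · rintro _ _ ⟨p, q, rfl, rfl⟩ a r hs
    rcases step_par.1 hs with ⟨x, hx, rfl⟩ | ⟨x, hx, rfl⟩
    · exact ⟨_, Step.parR _ hx, _, _, rfl, rfl⟩
    · exact ⟨_, Step.parL _ hx, _, _, rfl, rfl⟩

theorem bisim_nil (p : Proc A) : Bisim (Proc.par p Proc.nil) p := by
  refine bisim_of (fun x y => x = Proc.par y Proc.nil) ?_ ?_ rfl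
  · rintro _ p rfl a r hs
    rcases step_par.1 hs with ⟨x, hx, rfl⟩ | ⟨x, hx, rfl⟩
    · exact ⟨_, hx, rfl⟩
    · exact absurd hx step_nil
  · rintro _ p rfl a r hs
    exact ⟨_, Step.parL _ hs, rfl⟩

theorem bisim_assoc (p q r : Proc A) :
    Bisim (Proc.par (Proc.par p q) r) (Proc.par p (Proc.par q r)) := by
  refine bisim_of (fun x y => ∃ p q r, x = Proc.par (Proc.par p q) r ∧
    y = Proc.par p (Proc.par q r)) ?_ ?_ ⟨p, q, r, rfl, rfl⟩
  · rintro _ _ ⟨p, q, r, rfl, rfl⟩ a z hs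
    rcases step_par.1 hs with ⟨x, hx, rfl⟩ | ⟨x, hx, rfl⟩
    · rcases step_par.1 hx with ⟨y, hy, rfl⟩ | ⟨y, hy, rfl⟩
      · exact ⟨_, Step.parL _ hy, _, _, _, rfl, rfl⟩
      · exact ⟨_, Step.parR _ (Step.parL _ hy), _, _, _, rfl, rfl⟩
    · exact ⟨_, Step.parR _ (Step.parR _ hx), _, _, _, rfl, rfl⟩
  · rintro _ _ ⟨p, q, r, rfl, rfl⟩ a z hs
    rcases step_par.1 hs with ⟨x, hx, rfl⟩ | ⟨x, hx, rfl⟩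
    · exact ⟨_, Step.parL _ (Step.parL _ hx), _, _, _, rfl, rfl⟩
    · rcases step_par.1 hx with ⟨y, hy, rfl⟩ | ⟨y, hy, rfl⟩
      · exact ⟨_, Step.parL _ (Step.parR _ hy), _, _, _, rfl, rfl⟩
      · exact ⟨_, Step.parR _ hy, _, _, _, rfl, rfl⟩


theorem step_fin {p p' : Proc A} {a : A} (h : p.IsFin) (hs : Step p a p') :
    p'.IsFin ∧ p'.size + 1 = p.size := by
  induction hs with
  | pre => exact ⟨h, rfl⟩
  | repl => exact absurd h (by simp [Proc.IsFin])
  | parL q _ ih =>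
    obtain ⟨h1, h2⟩ := ih h.1
    exact ⟨⟨h1, h.2⟩, by simp only [Proc.size]; omega⟩
  | parR q _ ih =>
    obtain ⟨h1, h2⟩ := ih h.2
    exact ⟨⟨h.1, h1⟩, by simp only [Proc.size]; omega⟩

theorem ex_step {p : Proc A} (h : p.IsFin) (h0 : p.size ≠ 0) : ∃ a p', Step p a p' := by
  induction p with
  | nil => exact absurd rfl h0
  | pre a p => exact ⟨a, p, Step.pre⟩
  | par p q ihp ihq =>
    by_cases hp : p.size = 0
    · have hq : q.size ≠ 0 := by
        intro hq
        apply h0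
        simp [Proc.size, hp, hq]
      obtain ⟨a, q', hs⟩ := ihq h.2 hq
      exact ⟨a, _, Step.parR _ hs⟩
    · obtain ⟨a, p', hs⟩ := ihp h.1 hp
      exact ⟨a, _, Step.parL _ hs⟩
  | repl a p => exact ⟨_, _, Step.repl⟩

theorem size_le_of_bisim : ∀ n (p q : Proc A), p.size = n → p.IsFin → q.IsFin → Bisim p q →
    p.size ≤ q.size := by
  intro n
  induction n with
  | zero => intro p q hn _ _ _; omega
  | succ n ih =>
    intro p q hn hp hq hb
    obtain ⟨a, p', hs⟩ := ex_step hp (by omega)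
    obtain ⟨q', hs', hb'⟩ := hb.step hs
    obtain ⟨h1, h2⟩ := step_fin hp hs
    obtain ⟨h3, h4⟩ := step_fin hq hs'
    have := ih p' q' (by omega) h1 h3 hb'
    omega

theorem size_eq_of_bisim {p q : Proc A} (hp : p.IsFin) (hq : q.IsFin) (h : Bisim p q) :
    p.size = q.size :=
  le_antisymm (size_le_of_bisim _ p q rfl hp hq h) (size_le_of_bisim _ q p rfl hq hp h.symm)

theorem bisim_nil_of_size {p : Proc A} (hp : p.IsFin) (h0 : p.size = 0) : Bisim p Proc.nil := by
  refine bisim_of (fun x y => x = p ∧ y = Proc.nil) ?_ ?_ ⟨rfl, rfl⟩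
  · rintro _ _ ⟨rfl, rfl⟩ a p' hs
    have := (step_fin hp hs).2
    omega
  · rintro _ _ ⟨rfl, rfl⟩ a p' hs
    exact absurd hs step_nil

theorem fin_par {p q : Proc A} (hp : p.IsFin) (hq : q.IsFin) : (Proc.par p q).IsFin := ⟨hp, hq⟩

theorem fin_pre {a : A} {p : Proc A} (hp : p.IsFin) : (Proc.pre a p).IsFin := hp

theorem fin_of_pre {a : A} {p : Proc A} (hp : (Proc.pre a p).IsFin) : p.IsFin := hp

theorem step_reps {a : A} {F : Proc A} : ∀ n b r, Step (Proc.reps n (Proc.pre a F)) b r →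
    b = a ∧ ∃ m, n = m + 1 ∧ Bisim r (Proc.par F (Proc.reps m (Proc.pre a F)))
  | 0, b, r, h => absurd h step_nil
  | n + 1, b, r, h => by
    rcases step_par.1 h with ⟨x, hx, rfl⟩ | ⟨x, hx, rfl⟩
    · obtain ⟨rfl, rfl⟩ := step_pre.1 hx
      exact ⟨rfl, n, rfl, Bisim.refl _⟩
    · obtain ⟨rfl, m, rfl, hb⟩ := step_reps n _ _ hx
      refine ⟨rfl, m + 1, rfl, ?_⟩
      refine (bisim_par (Bisim.refl _) hb).trans ?_
      refine (bisim_assoc _ _ _).symm.trans ?_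
      exact (bisim_par (bisim_comm _ _) (Bisim.refl _)).trans (bisim_assoc _ _ _)

theorem bisim_distr (a : A) (F : Proc A) (m : ℕ) :
    Bisim (Proc.reps (m + 1) (Proc.pre a F))
      (Proc.pre a (Proc.par F (Proc.reps m (Proc.pre a F)))) := by
  refine bisim_of (fun x y => Bisim x y ∨ (x = Proc.reps (m + 1) (Proc.pre a F) ∧
    y = Proc.pre a (Proc.par F (Proc.reps m (Proc.pre a F))))) ?_ ?_ (Or.inr ⟨rfl, rfl⟩)
  · rintro x y (hb | ⟨rfl, rfl⟩) b x' hs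
    · obtain ⟨y', h1, h2⟩ := hb.step hs
      exact ⟨y', h1, Or.inl h2⟩
    · obtain ⟨rfl, k, e, hb⟩ := step_reps _ _ _ hs
      obtain rfl : m = k := by omega
      exact ⟨_, Step.pre, Or.inl hb⟩
  · rintro x y (hb | ⟨rfl, rfl⟩) b x' hs
    · obtain ⟨y', h1, h2⟩ := hb.symm.step hs
      exact ⟨y', h1, Or.inl h2.symm⟩
    · obtain ⟨rfl, rfl⟩ := step_pre.1 hs
      exact ⟨_, Step.parL _ Step.pre, Or.inl (Bisim.refl _)⟩


def finSetoid (A : Type) : Setoid {p : Proc A // p.IsFin} where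
  r x y := Bisim x.1 y.1
  iseqv := ⟨fun x => Bisim.refl x.1, fun h => Bisim.symm h, fun h h' => Bisim.trans h h'⟩

def QFin (A : Type) : Type := Quotient (finSetoid A)

def QFin.mk (p : Proc A) (h : p.IsFin) : QFin A := Quotient.mk (finSetoid A) ⟨p, h⟩

theorem QFin.mk_eq {p q : Proc A} {hp : p.IsFin} {hq : q.IsFin} :
    QFin.mk p hp = QFin.mk q hq ↔ Bisim p q := by
  constructor
  · intro h
    exact Quotient.exact h
  · intro h
    exact Quotient.sound (s := finSetoid A) h

theorem QFin.ind (x : QFin A) : ∃ p h, x = QFin.mk p h := by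
  induction x using Quotient.ind with
  | _ a => exact ⟨a.1, a.2, rfl⟩

def QFin.add (x y : QFin A) : QFin A :=
  Quotient.map₂ (sa := finSetoid A) (sb := finSetoid A) (sc := finSetoid A)
    (fun p q => ⟨Proc.par p.1 q.1, p.2, q.2⟩)
    (fun _ _ h _ _ h' => bisim_par h h') x y

instance : Add (QFin A) := ⟨QFin.add⟩

instance : Zero (QFin A) := ⟨QFin.mk Proc.nil trivial⟩

instance : AddCommMonoid (QFin A) where
  add_assoc x y z := by
    obtain ⟨p, hp, rfl⟩ := x.ind
    obtain ⟨q, hq, rfl⟩ := y.ind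
    obtain ⟨r, hr, rfl⟩ := z.ind
    exact QFin.mk_eq.2 (bisim_assoc p q r)
  zero_add x := by
    obtain ⟨p, hp, rfl⟩ := x.ind
    exact QFin.mk_eq.2 ((bisim_comm _ _).trans (bisim_nil p))
  add_zero x := by
    obtain ⟨p, hp, rfl⟩ := x.ind
    exact QFin.mk_eq.2 (bisim_nil p)
  add_comm x y := by
    obtain ⟨p, hp, rfl⟩ := x.ind
    obtain ⟨q, hq, rfl⟩ := y.ind
    exact QFin.mk_eq.2 (bisim_comm p q)
  nsmul := nsmulRec

theorem QFin.mk_par (p q : Proc A) (h : (Proc.par p q).IsFin) :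
    QFin.mk (Proc.par p q) h = QFin.mk p h.1 + QFin.mk q h.2 := rfl

theorem QFin.mk_nil (h : (Proc.nil : Proc A).IsFin) : QFin.mk Proc.nil h = 0 := rfl

def QFin.sz (x : QFin A) : ℕ :=
  Quotient.lift (s := finSetoid A) (fun p => p.1.size)
    (fun p q h => size_eq_of_bisim p.2 q.2 h) x

theorem QFin.sz_mk (p : Proc A) (h : p.IsFin) : (QFin.mk p h).sz = p.size := rfl

def QFin.st (x : QFin A) (a : A) (y : QFin A) : Prop :=
  ∃ p p' h h', x = QFin.mk p h ∧ y = QFin.mk p' h' ∧ Step p a p'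

theorem QFin.st_mk {p : Proc A} {h : p.IsFin} {a : A} {y : QFin A} :
    (QFin.mk p h).st a y ↔ ∃ p' h', Step p a p' ∧ y = QFin.mk p' h' := by
  constructor
  · rintro ⟨q, q', hq, hq', e, rfl, hs⟩
    obtain ⟨p', hs', hb⟩ := (QFin.mk_eq.1 e).symm.step hs
    exact ⟨p', (step_fin h hs').1, hs', QFin.mk_eq.2 hb⟩
  · rintro ⟨p', h', hs, rfl⟩
    exact ⟨p, p', h, h', rfl, rfl, hs⟩

def QFin.pr (a : A) (x : QFin A) : QFin A :=
  Quotient.map (sa := finSetoid A) (sb := finSetoid A)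
    (fun p => ⟨Proc.pre a p.1, p.2⟩) (fun _ _ h => bisim_pre a h) x

theorem QFin.mk_pre (a : A) (p : Proc A) (h : (Proc.pre a p).IsFin) :
    QFin.mk (Proc.pre a p) h = QFin.pr a (QFin.mk p (fin_of_pre h)) := rfl

theorem QFin.pr_st (a : A) (x : QFin A) (b : A) (z : QFin A) :
    (QFin.pr a x).st b z ↔ b = a ∧ z = x := by
  obtain ⟨p, hp, rfl⟩ := x.ind
  rw [← QFin.mk_pre a p (fin_pre hp), QFin.st_mk]
  constructor
  · rintro ⟨p', h', hs, rfl⟩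
    obtain ⟨rfl, rfl⟩ := step_pre.1 hs
    exact ⟨rfl, rfl⟩
  · rintro ⟨rfl, rfl⟩
    exact ⟨p, hp, Step.pre, rfl⟩

theorem QFin.palg : PAlg (QFin.sz (A := A)) QFin.st where
  sz_add x y := by
    obtain ⟨p, hp, rfl⟩ := x.ind
    obtain ⟨q, hq, rfl⟩ := y.ind
    rfl
  sz_zero x := by
    obtain ⟨p, hp, rfl⟩ := x.ind
    constructor
    · intro h
      exact QFin.mk_eq.2 (bisim_nil_of_size hp h)
    · intro h
      rw [h]; rfl
  st_sz x a y h := by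
    obtain ⟨p, p', h, h', rfl, rfl, hs⟩ := h
    exact (step_fin h hs).2
  ex_st x hx := by
    obtain ⟨p, hp, rfl⟩ := x.ind
    obtain ⟨a, p', hs⟩ := ex_step hp (fun h0 => hx (QFin.mk_eq.2 (bisim_nil_of_size hp h0)))
    exact ⟨a, QFin.mk p' (step_fin hp hs).1, QFin.st_mk.2 ⟨p', _, hs, rfl⟩⟩
  st_add x y a z := by
    obtain ⟨p, hp, rfl⟩ := x.ind
    obtain ⟨q, hq, rfl⟩ := y.ind
    rw [← QFin.mk_par p q (fin_par hp hq), QFin.st_mk]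
    constructor
    · rintro ⟨r, hr, hs, rfl⟩
      rcases step_par.1 hs with ⟨p', h1, rfl⟩ | ⟨q', h1, rfl⟩
      · exact Or.inl ⟨QFin.mk p' hr.1, QFin.st_mk.2 ⟨_, _, h1, rfl⟩, rfl⟩
      · exact Or.inr ⟨QFin.mk q' hr.2, QFin.st_mk.2 ⟨_, _, h1, rfl⟩, rfl⟩
    · rintro (⟨x', h1, rfl⟩ | ⟨y', h1, rfl⟩)
      · obtain ⟨p', hp', h2, rfl⟩ := QFin.st_mk.1 h1
        exact ⟨_, fin_par hp' hq, Step.parL _ h2, rfl⟩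
      · obtain ⟨q', hq', h2, rfl⟩ := QFin.st_mk.1 h1
        exact ⟨_, fin_par hp hq', Step.parR _ h2, rfl⟩
  ext x y h := by
    obtain ⟨p, hp, rfl⟩ := x.ind
    obtain ⟨q, hq, rfl⟩ := y.ind
    refine QFin.mk_eq.2 ?_
    refine bisim_of (fun u v => Bisim u v ∨ (u = p ∧ v = q)) ?_ ?_ (Or.inr ⟨rfl, rfl⟩)
    · rintro u v (hb | ⟨rfl, rfl⟩) a u' hs
      · obtain ⟨y', h1, h2⟩ := hb.step hs
        exact ⟨y', h1, Or.inl h2⟩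
      · obtain ⟨v', hv', h2, e⟩ := QFin.st_mk.1
          ((h a _).1 (QFin.st_mk.2 ⟨u', (step_fin hp hs).1, hs, rfl⟩))
        exact ⟨v', h2, Or.inl (QFin.mk_eq.1 e)⟩
    · rintro u v (hb | ⟨rfl, rfl⟩) a u' hs
      · obtain ⟨y', h1, h2⟩ := hb.symm.step hs
        exact ⟨y', h1, Or.inl h2.symm⟩
      · obtain ⟨v', hv', h2, e⟩ := QFin.st_mk.1
          ((h a _).2 (QFin.st_mk.2 ⟨u', (step_fin hq hs).1, hs, rfl⟩))
        exact ⟨v', h2, Or.inl (QFin.mk_eq.1 e).symm⟩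


theorem QFin.pr_inj {a b : A} {x y : QFin A} (h : QFin.pr a x = QFin.pr b y) : a = b ∧ x = y := by
  have h1 := (QFin.pr_st a x a x).2 ⟨rfl, rfl⟩
  rw [h] at h1
  exact (QFin.pr_st b y a x).1 h1

noncomputable def QFin.out (x : QFin A) : Proc A := (Quotient.out (s := finSetoid A) x).1

theorem QFin.out_fin (x : QFin A) : x.out.IsFin := (Quotient.out (s := finSetoid A) x).2

theorem QFin.mk_out (x : QFin A) : QFin.mk x.out x.out_fin = x :=
  Quotient.out_eq (s := finSetoid A) x

open Classical in
noncomputable def canon (x : QFin A) : Proc A :=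
  if h : ∃ a y, x = QFin.pr a y then
    Proc.pre h.choose (QFin.out h.choose_spec.choose) else Proc.nil

theorem canon_pr (a : A) (y : QFin A) : canon (QFin.pr a y) = Proc.pre a y.out := by
  have h : ∃ b z, QFin.pr a y = QFin.pr b z := ⟨a, y, rfl⟩
  unfold canon
  rw [dif_pos h]
  have key : ∀ b z, QFin.pr a y = QFin.pr b z → Proc.pre b z.out = Proc.pre a y.out := by
    intro b z e
    obtain ⟨rfl, rfl⟩ := QFin.pr_inj e
    rfl
  exact key _ _ h.choose_spec.choose_spec

noncomputable def canonProd (l : List (QFin A)) : Proc A :=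
  (l.map canon).foldr Proc.par Proc.nil

theorem EqD.nilPar (p : Proc A) : EqD (Proc.par Proc.nil p) p :=
  (EqD.parComm _ _).trans (EqD.parNil p)

theorem canonProd_append (l l' : List (QFin A)) :
    EqD (canonProd (l ++ l')) (Proc.par (canonProd l) (canonProd l')) := by
  induction l with
  | nil => exact (EqD.nilPar _).symm
  | cons x l ih => exact (EqD.congPar (EqD.refl _) ih).trans (EqD.parAssoc _ _ _).symm

theorem canonProd_perm {l l' : List (QFin A)} (h : l.Perm l') :
    EqD (canonProd l) (canonProd l') := by
  induction h with
  | nil => exact EqD.refl _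
  | cons x _ ih => exact EqD.congPar (EqD.refl _) ih
  | swap x y l =>
    exact (EqD.parAssoc _ _ _).symm.trans
      ((EqD.congPar (EqD.parComm _ _) (EqD.refl _)).trans (EqD.parAssoc _ _ _))
  | trans _ _ ih1 ih2 => exact ih1.trans ih2

theorem reps_fin {p : Proc A} (h : p.IsFin) : ∀ n, (Proc.reps n p).IsFin
  | 0 => trivial
  | n + 1 => ⟨h, reps_fin h n⟩

theorem mk_reps {p : Proc A} (h : p.IsFin) : ∀ n,
    QFin.mk (Proc.reps n p) (reps_fin h n) = n • QFin.mk p h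
  | 0 => by rw [zero_nsmul]; rfl
  | n + 1 => by
    rw [succ_nsmul', ← mk_reps h n]; rfl

theorem reps_canon (a : A) (y : QFin A) : ∀ n,
    Proc.reps n (Proc.pre a y.out) = canonProd (List.replicate n (QFin.pr a y))
  | 0 => rfl
  | n + 1 => by
    rw [List.replicate_succ]
    show Proc.par _ _ = Proc.par _ _
    rw [canon_pr, reps_canon a y n]
    rfl

theorem eqD_of_bisim : ∀ n (p q : Proc A), p.size ≤ n → p.IsFin → q.IsFin → Bisim p q →
    EqD p q := by
  intro n
  induction n using Nat.strong_induction_on with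
  | _ n ih =>
    have dec : ∀ p : Proc A, p.size ≤ n → ∀ hp : p.IsFin,
        ∃ l : List (QFin A), (∀ x ∈ l, Prm x) ∧ l.sum = QFin.mk p hp ∧ EqD p (canonProd l) := by
      intro p
      induction p with
      | nil => intro _ hp; exact ⟨[], by simp, rfl, EqD.refl _⟩
      | repl a p => intro _ hp; exact absurd hp (by simp [Proc.IsFin])
      | par p q ihp ihq =>
        intro hn hp
        simp only [Proc.size] at hn
        obtain ⟨l, h1, h2, h3⟩ := ihp (by omega) hp.1
        obtain ⟨l', h1', h2', h3'⟩ := ihq (by omega) hp.2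
        refine ⟨l ++ l', ?_, ?_, (EqD.congPar h3 h3').trans (canonProd_append _ _).symm⟩
        · intro x hx
          rcases List.mem_append.1 hx with hx | hx
          · exact h1 x hx
          · exact h1' x hx
        · rw [List.sum_append, h2, h2', QFin.mk_par]
      | pre a p _ =>
        intro hn hp'
        have hp : p.IsFin := fin_of_pre hp'
        simp only [Proc.size] at hn
        rcases QFin.palg.pre_fac QFin.pr QFin.pr_st a (QFin.mk p hp) with h | ⟨g, m, hg, e⟩
        · refine ⟨[QFin.pr a (QFin.mk p hp)], by simpa using h, by simp [QFin.mk_pre], ?_⟩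
          have h1 : EqD p (QFin.mk p hp).out :=
            ih p.size (by omega) _ _ le_rfl hp (QFin.out_fin _)
              (QFin.mk_eq.1 (QFin.mk_out (QFin.mk p hp)).symm)
          refine (EqD.congPre a h1).trans ?_
          rw [← canon_pr]
          exact (EqD.parNil _).symm
        · have hgf : (Proc.pre a g.out).IsFin := fin_pre g.out_fin
          have hpg : QFin.pr a g = QFin.mk (Proc.pre a g.out) hgf := by
            rw [QFin.mk_pre, QFin.mk_out]
          have e' : QFin.mk p hp = QFin.mk (Proc.par g.out (Proc.reps m (Proc.pre a g.out)))
              (fin_par g.out_fin (reps_fin hgf m)) := by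
            rw [QFin.mk_par, mk_reps hgf, QFin.mk_out, ← hpg, e]
          have h1 : EqD p (Proc.par g.out (Proc.reps m (Proc.pre a g.out))) :=
            ih p.size (by omega) _ _ le_rfl hp (fin_par g.out_fin (reps_fin hgf m)) (QFin.mk_eq.1 e')
          have h2 : EqD (Proc.pre a p) (Proc.reps (m + 1) (Proc.pre a g.out)) :=
            (EqD.congPre a h1).trans (EqD.distr a g.out m g.out_fin)
          refine ⟨List.replicate (m + 1) (QFin.pr a g), ?_, ?_, ?_⟩
          · intro x hx
            rw [List.eq_of_mem_replicate hx]; exact hg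
          · rw [List.sum_replicate, hpg, ← mk_reps hgf]
            refine QFin.mk_eq.2 ?_
            refine Bisim.trans ?_ (bisim_pre a (QFin.mk_eq.1 e').symm)
            exact bisim_distr a g.out m
          · rw [← reps_canon]; exact h2
    intro p q hn hp hq hb
    have hsz := size_eq_of_bisim hp hq hb
    obtain ⟨l, h1, h2, h3⟩ := dec p hn hp
    obtain ⟨l', h1', h2', h3'⟩ := dec q (by omega) hq
    have e : (l : Multiset (QFin A)) = (l' : Multiset (QFin A)) := by
      refine QFin.palg.uf _ _ _ (by simpa using h1) (by simpa using h1') ?_ rfl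
      rw [Multiset.sum_coe, Multiset.sum_coe, h2, h2', QFin.mk_eq]
      exact hb
    exact h3.trans ((canonProd_perm (Multiset.coe_eq_coe.1 e)).trans h3'.symm)

end CCS

namespace CCS

variable {A : Type}


def Eqv (S X Y : Proc A) : Prop := Bisim (Proc.par S X) (Proc.par S Y)

theorem Eqv.symm {S X Y : Proc A} (h : Eqv S X Y) : Eqv S Y X := Bisim.symm h

theorem Eqv.trans {S X Y Z : Proc A} (h : Eqv S X Y) (h' : Eqv S Y Z) : Eqv S X Z :=
  Bisim.trans h h'

theorem Eqv.of_bisim {S X Y : Proc A} (h : Bisim X Y) : Eqv S X Y :=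
  bisim_par (Bisim.refl S) h

theorem Eqv.refl (S X : Proc A) : Eqv S X X := Bisim.refl _

theorem bisim_swap (x y z : Proc A) :
    Bisim (Proc.par (Proc.par x y) z) (Proc.par (Proc.par x z) y) :=
  (bisim_assoc _ _ _).trans
    ((bisim_par (Bisim.refl _) (bisim_comm _ _)).trans (bisim_assoc _ _ _).symm)

theorem bisim_nilL (p : Proc A) : Bisim (Proc.par Proc.nil p) p :=
  (bisim_comm _ _).trans (bisim_nil p)

theorem Eqv.parR {S X Y : Proc A} (h : Eqv S X Y) (Z : Proc A) :
    Eqv S (Proc.par X Z) (Proc.par Y Z) :=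
  (bisim_assoc _ _ _).symm.trans ((bisim_par h (Bisim.refl Z)).trans (bisim_assoc _ _ _))

theorem Eqv.parL {S X Y : Proc A} (h : Eqv S X Y) (Z : Proc A) :
    Eqv S (Proc.par Z X) (Proc.par Z Y) :=
  (Eqv.of_bisim (bisim_comm _ _)).trans ((h.parR Z).trans (Eqv.of_bisim (bisim_comm _ _)))

theorem repl_step {S S' : Proc A} {a : A} (hS : ReplOnly S) (h : Step S a S') :
    ∃ G, TopRepl S a G ∧ Bisim S' (Proc.par S G) := by
  induction h with
  | pre => exact absurd hS (by simp [ReplOnly])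
  | repl => exact ⟨_, TopRepl.repl _ _, Bisim.refl _⟩
  | parL q _ ih =>
    obtain ⟨G, h1, h2⟩ := ih hS.1
    exact ⟨G, TopRepl.parL _ h1, (bisim_par h2 (Bisim.refl _)).trans (bisim_swap _ _ _)⟩
  | parR p _ ih =>
    obtain ⟨G, h1, h2⟩ := ih hS.2
    exact ⟨G, TopRepl.parR _ h1, (bisim_par (Bisim.refl _) h2).trans (bisim_assoc _ _ _).symm⟩

theorem repl_step' {S G : Proc A} {a : A} (h : TopRepl S a G) :
    ∃ S', Step S a S' ∧ Bisim S' (Proc.par S G) := by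
  induction h with
  | repl => exact ⟨_, Step.repl, Bisim.refl _⟩
  | parL q _ ih =>
    obtain ⟨S', h1, h2⟩ := ih
    exact ⟨_, Step.parL _ h1, (bisim_par h2 (Bisim.refl _)).trans (bisim_swap _ _ _)⟩
  | parR p _ ih =>
    obtain ⟨S', h1, h2⟩ := ih
    exact ⟨_, Step.parR _ h1, (bisim_par (Bisim.refl _) h2).trans (bisim_assoc _ _ _).symm⟩

theorem topRepl_fin {S G : Proc A} {a : A} (hS : ReplOnly S) (h : TopRepl S a G) : G.IsFin := by
  induction h with
  | repl => exact hS
  | parL q _ ih => exact ih hS.1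
  | parR p _ ih => exact ih hS.2

theorem wf_of_replOnly {S : Proc A} (hS : ReplOnly S) : S.Wf := by
  induction S with
  | nil => trivial
  | pre => exact absurd hS (by simp [ReplOnly])
  | par p q ihp ihq => exact ⟨ihp hS.1, ihq hS.2⟩
  | repl => exact hS

theorem stepS {S X r : Proc A} {a : A} (hS : ReplOnly S) (h : Step (Proc.par S X) a r) :
    (∃ X', Step X a X' ∧ r = Proc.par S X') ∨
    (∃ G, TopRepl S a G ∧ Bisim r (Proc.par S (Proc.par X G))) := by
  rcases step_par.1 h with ⟨S', h1, rfl⟩ | ⟨X', h1, rfl⟩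
  · obtain ⟨G, h2, h3⟩ := repl_step hS h1
    refine Or.inr ⟨G, h2, ?_⟩
    exact (bisim_par h3 (Bisim.refl _)).trans ((bisim_swap _ _ _).trans (bisim_assoc _ _ _))
  · exact Or.inl ⟨X', h1, rfl⟩

theorem stepS' {S G : Proc A} {a : A} (X : Proc A) (h : TopRepl S a G) :
    ∃ r, Step (Proc.par S X) a r ∧ Bisim r (Proc.par S (Proc.par X G)) := by
  obtain ⟨S', h1, h3⟩ := repl_step' h
  exact ⟨_, Step.parL _ h1,
    (bisim_par h3 (Bisim.refl _)).trans ((bisim_swap _ _ _).trans (bisim_assoc _ _ _))⟩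

theorem Eqv.step {S X Y X' : Proc A} {a : A} (hS : ReplOnly S) (h : Eqv S X Y)
    (hs : Step X a X') :
    (∃ Y', Step Y a Y' ∧ Eqv S X' Y') ∨ (∃ G, TopRepl S a G ∧ Eqv S X' (Proc.par Y G)) := by
  obtain ⟨r, h1, h2⟩ := Bisim.step h (Step.parR S hs)
  rcases stepS hS h1 with ⟨Y', h3, rfl⟩ | ⟨G, h3, h4⟩
  · exact Or.inl ⟨Y', h3, h2⟩
  · exact Or.inr ⟨G, h3, h2.trans h4⟩

theorem bisim_components {S S' : Proc A} (hS : ReplOnly S) (hS' : ReplOnly S')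
    (h1 : ∀ a G, TopRepl S a G → ∃ G', TopRepl S' a G' ∧ Eqv S G G')
    (h2 : ∀ a G', TopRepl S' a G' → ∃ G, TopRepl S a G ∧ Eqv S G G') : Bisim S S' := by
  have key : Bisim (Proc.par S Proc.nil) (Proc.par S' Proc.nil) := by
    refine bisim_upto (fun P Q => ∃ X Y, P = Proc.par S X ∧ Q = Proc.par S' Y ∧ Eqv S X Y)
      ?_ ?_ ⟨Proc.nil, Proc.nil, rfl, rfl, Eqv.refl _ _⟩
    · rintro _ _ ⟨X, Y, rfl, rfl, e⟩ a r hs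
      rcases stepS hS hs with ⟨X', hX, rfl⟩ | ⟨G, hG, hr⟩
      · rcases e.step hS hX with ⟨Y', hY, e'⟩ | ⟨G, hG, e'⟩
        · exact ⟨_, Step.parR _ hY, _, _, Bisim.refl _, ⟨_, _, rfl, rfl, e'⟩, Bisim.refl _⟩
        · obtain ⟨G', hG', e''⟩ := h1 _ _ hG
          obtain ⟨q, hq, hq'⟩ := stepS' Y hG'
          exact ⟨q, hq, _, _, Bisim.refl _, ⟨_, _, rfl, rfl, e'.trans (e''.parL Y)⟩, hq'.symm⟩
      · obtain ⟨G', hG', e''⟩ := h1 _ _ hG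
        obtain ⟨q, hq, hq'⟩ := stepS' Y hG'
        exact ⟨q, hq, _, _, hr, ⟨_, _, rfl, rfl, (e.parR G).trans (e''.parL Y)⟩, hq'.symm⟩
    · rintro _ _ ⟨X, Y, rfl, rfl, e⟩ a r hs
      rcases stepS hS' hs with ⟨Y', hY, rfl⟩ | ⟨G', hG', hr⟩
      · rcases e.symm.step hS hY with ⟨X', hX, e'⟩ | ⟨G, hG, e'⟩
        · exact ⟨_, Step.parR _ hX, _, _, Bisim.refl _, ⟨_, _, rfl, rfl, e'.symm⟩, Bisim.refl _⟩
        · obtain ⟨q, hq, hq'⟩ := stepS' X hG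
          exact ⟨q, hq, _, _, hq', ⟨_, _, rfl, rfl, e'.symm⟩, Bisim.refl _⟩
      · obtain ⟨G, hG, e''⟩ := h2 _ _ hG'
        obtain ⟨q, hq, hq'⟩ := stepS' X hG
        exact ⟨q, hq, _, _, hq', ⟨_, _, rfl, rfl, (e.parR G).trans (e''.parL Y)⟩, hr.symm⟩
  exact (bisim_nil S).symm.trans (key.trans (bisim_nil S'))

theorem repl_replace {S G : Proc A} {a : A} (h : TopRepl S a G) (hS : ReplOnly S) (F : Proc A)
    (hF : F.IsFin) : ∃ S', ReplOnly S' ∧ S'.size + G.size = S.size + F.size ∧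
      (∀ b H, TopRepl S b H → TopRepl S' b H ∨ (b = a ∧ H = G ∧ TopRepl S' a F)) ∧
      (∀ b H, TopRepl S' b H → TopRepl S b H ∨ (b = a ∧ H = F)) := by
  induction h with
  | repl a p =>
    refine ⟨Proc.repl a F, hF, by simp only [Proc.size]; omega, ?_, ?_⟩
    · intro b H hb
      cases hb
      exact Or.inr ⟨rfl, rfl, TopRepl.repl _ _⟩
    · intro b H hb
      cases hb
      exact Or.inr ⟨rfl, rfl⟩
  | parL q _ ih =>
    obtain ⟨S', h1, h2, h3, h4⟩ := ih hS.1
    refine ⟨Proc.par S' q, ⟨h1, hS.2⟩, by simp only [Proc.size]; omega, ?_, ?_⟩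
    · intro b H hb
      cases hb with
      | parL _ hb =>
        rcases h3 _ _ hb with h | ⟨h5, h6, h7⟩
        · exact Or.inl (TopRepl.parL _ h)
        · exact Or.inr ⟨h5, h6, TopRepl.parL _ h7⟩
      | parR _ hb => exact Or.inl (TopRepl.parR _ hb)
    · intro b H hb
      cases hb with
      | parL _ hb =>
        rcases h4 _ _ hb with h | h
        · exact Or.inl (TopRepl.parL _ h)
        · exact Or.inr h
      | parR _ hb => exact Or.inl (TopRepl.parR _ hb)
  | parR q _ ih =>
    obtain ⟨S', h1, h2, h3, h4⟩ := ih hS.2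
    refine ⟨Proc.par q S', ⟨hS.1, h1⟩, by simp only [Proc.size]; omega, ?_, ?_⟩
    · intro b H hb
      cases hb with
      | parR _ hb =>
        rcases h3 _ _ hb with h | ⟨h5, h6, h7⟩
        · exact Or.inl (TopRepl.parR _ h)
        · exact Or.inr ⟨h5, h6, TopRepl.parR _ h7⟩
      | parL _ hb => exact Or.inl (TopRepl.parL _ hb)
    · intro b H hb
      cases hb with
      | parR _ hb =>
        rcases h4 _ _ hb with h | h
        · exact Or.inl (TopRepl.parR _ h)
        · exact Or.inr h
      | parL _ hb => exact Or.inl (TopRepl.parL _ hb)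

theorem seed_min {S G F : Proc A} {a : A} (hS : ReplOnly S) (hseed : IsSeed S)
    (h : TopRepl S a G) (hF : F.IsFin) (e : Eqv S G F) : G.size ≤ F.size := by
  obtain ⟨S', h1, h2, h3, h4⟩ := repl_replace h hS F hF
  have hb : Bisim S S' := by
    refine bisim_components hS h1 ?_ ?_
    · intro b H hb
      rcases h3 _ _ hb with h5 | ⟨rfl, rfl, h5⟩
      · exact ⟨H, h5, Eqv.refl _ _⟩
      · exact ⟨F, h5, e⟩
    · intro b H hb
      rcases h4 _ _ hb with h5 | ⟨rfl, rfl⟩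
      · exact ⟨H, h5, Eqv.refl _ _⟩
      · exact ⟨G, h, e⟩
  have := hseed.2 S' (wf_of_replOnly h1) hb.symm
  omega

theorem eqv_nil_of_par {S Y Z : Proc A} (hS : ReplOnly S)
    (h : Eqv S (Proc.par Y Z) Proc.nil) : Eqv S Y Proc.nil := by
  let R : Proc A → Proc A → Prop := fun P Q => ∃ X Y Z, Eqv S (Proc.par Y Z) Proc.nil ∧
    ((P = Proc.par S (Proc.par X Y) ∧ Q = Proc.par S X) ∨
     (Q = Proc.par S (Proc.par X Y) ∧ P = Proc.par S X))
  have hsym : ∀ P Q, R P Q → R Q P := by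
    rintro P Q ⟨X, Y, Z, e, h | h⟩
    · exact ⟨X, Y, Z, e, Or.inr h⟩
    · exact ⟨X, Y, Z, e, Or.inl h⟩
  have main : ∀ p q, R p q → ∀ a p', Step p a p' →
      ∃ q', Step q a q' ∧ ∃ x y, Bisim p' x ∧ R x y ∧ Bisim y q' := by
    rintro _ _ ⟨X, Y, Z, e, ⟨rfl, rfl⟩ | ⟨rfl, rfl⟩⟩ a r hs
    · rcases stepS hS hs with ⟨W, hW, rfl⟩ | ⟨G, hG, hr⟩
      · rcases step_par.1 hW with ⟨X', hX, rfl⟩ | ⟨Y', hY, rfl⟩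
        · exact ⟨_, Step.parR _ hX, _, _, Bisim.refl _,
            ⟨X', Y, Z, e, Or.inl ⟨rfl, rfl⟩⟩, Bisim.refl _⟩
        · rcases e.step hS (Step.parL Z hY) with ⟨Y'', h1, -⟩ | ⟨G, hG, e'⟩
          · exact absurd h1 step_nil
          · obtain ⟨q, hq, hq'⟩ := stepS' X hG
            refine ⟨q, hq, Proc.par S (Proc.par X Y'), Proc.par S (Proc.par (Proc.par X Y') Z),
              Bisim.refl _, ⟨Proc.par X Y', Z, Y, ?_, Or.inr ⟨rfl, rfl⟩⟩, ?_⟩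
            · exact (Eqv.of_bisim (bisim_comm _ _)).trans e
            · refine Bisim.trans ?_ hq'.symm
              have e2 : Eqv S (Proc.par Y' Z) G := e'.trans (Eqv.of_bisim (bisim_nilL _))
              exact (Eqv.of_bisim (bisim_assoc _ _ _)).trans (e2.parL X)
      · obtain ⟨q, hq, hq'⟩ := stepS' X hG
        refine ⟨q, hq, Proc.par S (Proc.par (Proc.par X G) Y), Proc.par S (Proc.par X G), ?_,
          ⟨Proc.par X G, Y, Z, e, Or.inl ⟨rfl, rfl⟩⟩, hq'.symm⟩
        exact hr.trans (Eqv.of_bisim (bisim_swap _ _ _))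
    · rcases stepS hS hs with ⟨X', hX, rfl⟩ | ⟨G, hG, hr⟩
      · exact ⟨_, Step.parR _ (Step.parL _ hX), _, _, Bisim.refl _,
            ⟨X', Y, Z, e, Or.inr ⟨rfl, rfl⟩⟩, Bisim.refl _⟩
      · obtain ⟨q, hq, hq'⟩ := stepS' (Proc.par X Y) hG
        refine ⟨q, hq, Proc.par S (Proc.par X G), Proc.par S (Proc.par (Proc.par X G) Y), hr,
          ⟨Proc.par X G, Y, Z, e, Or.inr ⟨rfl, rfl⟩⟩, ?_⟩
        exact Bisim.trans (Eqv.of_bisim (bisim_swap _ _ _)) hq'.symm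
  have key : Bisim (Proc.par S (Proc.par Proc.nil Y)) (Proc.par S Proc.nil) := by
    refine bisim_upto R main ?_ ⟨Proc.nil, Y, Z, h, Or.inl ⟨rfl, rfl⟩⟩
    intro p q hR a q' hs
    obtain ⟨p', h1, x, y, h2, h3, h4⟩ := main q p (hsym _ _ hR) a q' hs
    exact ⟨p', h1, y, x, h4.symm, hsym _ _ h3, h2.symm⟩
  exact (Eqv.of_bisim (bisim_nilL Y).symm).trans key

theorem Eqv.pre {S F F' : Proc A} (hS : ReplOnly S) (a : A) (h : Eqv S F F') :
    Eqv S (Proc.pre a F) (Proc.pre a F') := by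
  let R : Proc A → Proc A → Proc A → Proc A → Prop := fun F F' P Q => Bisim P Q ∨
    ∃ X, P = Proc.par S (Proc.par X (Proc.pre a F)) ∧ Q = Proc.par S (Proc.par X (Proc.pre a F'))
  have main : ∀ F F', Eqv S F F' → ∀ p q, R F F' p q → ∀ b p', Step p b p' →
      ∃ q', Step q b q' ∧ ∃ x y, Bisim p' x ∧ R F F' x y ∧ Bisim y q' := by
    rintro F F' h p q (hb | ⟨X, rfl, rfl⟩) b r hs
    · obtain ⟨q', h1, h2⟩ := hb.step hs
      exact ⟨q', h1, _, _, Bisim.refl _, Or.inl h2, Bisim.refl _⟩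
    · rcases stepS hS hs with ⟨W, hW, rfl⟩ | ⟨G, hG, hr⟩
      · rcases step_par.1 hW with ⟨X', hX, rfl⟩ | ⟨Y', hY, rfl⟩
        · exact ⟨_, Step.parR _ (Step.parL _ hX), _, _, Bisim.refl _,
            Or.inr ⟨X', rfl, rfl⟩, Bisim.refl _⟩
        · obtain ⟨rfl, rfl⟩ := step_pre.1 hY
          exact ⟨_, Step.parR _ (Step.parR _ Step.pre), _, _, Bisim.refl _,
            Or.inl (h.parL X), Bisim.refl _⟩
      · obtain ⟨q, hq, hq'⟩ := stepS' (Proc.par X (Proc.pre a F')) hG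
        exact ⟨q, hq, _, _, hr.trans (Eqv.of_bisim (bisim_swap _ _ _)),
          Or.inr ⟨Proc.par X G, rfl, rfl⟩, Bisim.trans (Eqv.of_bisim (bisim_swap _ _ _)) hq'.symm⟩
  have hsym : ∀ F F' P Q, R F F' P Q → R F' F Q P := by
    rintro F F' P Q (hb | ⟨X, h1, h2⟩)
    · exact Or.inl hb.symm
    · exact Or.inr ⟨X, h2, h1⟩
  have key : Bisim (Proc.par S (Proc.par Proc.nil (Proc.pre a F)))
      (Proc.par S (Proc.par Proc.nil (Proc.pre a F'))) := by
    refine bisim_upto (R F F') (main F F' h) ?_ (Or.inr ⟨Proc.nil, rfl, rfl⟩)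
    intro p q hR b q' hs
    obtain ⟨p', h1, x, y, h2, h3, h4⟩ := main F' F h.symm q p (hsym _ _ _ _ hR) b q' hs
    exact ⟨p', h1, y, x, h4.symm, hsym _ _ _ _ h3, h2.symm⟩
  exact (Eqv.of_bisim (bisim_nilL _).symm).trans
    (Eqv.trans key (Eqv.of_bisim (bisim_nilL _)))


def Clean (S : Proc A) : Proc A → Prop
  | .nil => True
  | .pre a p => ¬ Eqv S (Proc.pre a p) Proc.nil ∧ Clean S p
  | .par p q => Clean S p ∧ Clean S q
  | .repl _ _ => False

theorem Clean.fin {S F : Proc A} (h : Clean S F) : F.IsFin := by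
  induction F with
  | nil => trivial
  | pre a p ih => exact ih h.2
  | par p q ihp ihq => exact ⟨ihp h.1, ihq h.2⟩
  | repl => exact absurd h (by simp [Clean])

theorem Clean.step {S F F' : Proc A} {a : A} (h : Clean S F) (hs : Step F a F') :
    Clean S F' := by
  induction hs with
  | pre => exact h.2
  | repl => exact absurd h (by simp [Clean])
  | parL q _ ih => exact ⟨ih h.1, h.2⟩
  | parR q _ ih => exact ⟨h.1, ih h.2⟩

theorem shrink {S F : Proc A} (hS : ReplOnly S) (hF : F.IsFin) (h : ¬ Clean S F) :
    ∃ F', F'.IsFin ∧ Eqv S F F' ∧ F'.size < F.size := by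
  induction F with
  | nil => exact absurd trivial h
  | pre a p ih =>
    by_cases e : Eqv S (Proc.pre a p) Proc.nil
    · exact ⟨Proc.nil, trivial, e, by simp [Proc.size]⟩
    · obtain ⟨F', h1, h2, h3⟩ := ih hF fun hc => h ⟨e, hc⟩
      exact ⟨Proc.pre a F', h1, h2.pre hS a, by simp only [Proc.size]; omega⟩
  | par p q ihp ihq =>
    by_cases hp : Clean S p
    · obtain ⟨F', h1, h2, h3⟩ := ihq hF.2 fun hc => h ⟨hp, hc⟩
      exact ⟨Proc.par p F', ⟨hF.1, h1⟩, h2.parL p, by simp only [Proc.size]; omega⟩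
    · obtain ⟨F', h1, h2, h3⟩ := ihp hF.1 hp
      exact ⟨Proc.par F' q, ⟨h1, hF.2⟩, h2.parR q, by simp only [Proc.size]; omega⟩
  | repl => exact absurd hF (by simp [Proc.IsFin])

theorem topRepl_clean {S G : Proc A} {a : A} (hS : ReplOnly S) (hseed : IsSeed S)
    (h : TopRepl S a G) : Clean S G := by
  by_contra hc
  obtain ⟨F', h1, h2, h3⟩ := shrink hS (topRepl_fin hS h) hc
  have := seed_min hS hseed h h1 h2
  omega

theorem Clean.size_zero {S F : Proc A} (hS : ReplOnly S) (h : Clean S F)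
    (e : Eqv S F Proc.nil) : F.size = 0 := by
  induction F with
  | nil => rfl
  | pre a p => exact absurd e h.1
  | par p q ihp ihq =>
    have h1 := ihp h.1 (eqv_nil_of_par hS e)
    have h2 := ihq h.2 (eqv_nil_of_par hS ((Eqv.of_bisim (bisim_comm _ _)).trans e))
    simp only [Proc.size]; omega
  | repl => exact absurd h (by simp [Clean])

theorem dist_ge {S : Proc A} (hS : ReplOnly S) (hseed : IsSeed S) {P P0 : Proc A} {k : ℕ}
    (hk : NSteps P0 k P) : ∀ F, Clean S F → Bisim P0 (Proc.par S F) →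
    Bisim P (Proc.par S Proc.nil) → F.size ≤ k := by
  induction hk with
  | zero p =>
    intro F hF h1 h2
    exact le_of_eq (hF.size_zero hS (h1.symm.trans h2))
  | succ hs _ ih =>
    intro F hF h1 h2
    obtain ⟨r, h3, h4⟩ := h1.step hs
    rcases stepS hS h3 with ⟨F', h5, rfl⟩ | ⟨G, h5, h6⟩
    · have := ih F' (hF.step h5) h4 h2
      have := (step_fin hF.fin h5).2
      omega
    · have := ih (Proc.par F G) ⟨hF, topRepl_clean hS hseed h5⟩ (h4.trans h6) h2
      simp only [Proc.size] at this
      omega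

theorem nsteps_parR {p p' : Proc A} (q : Proc A) {k : ℕ} (h : NSteps p k p') :
    NSteps (Proc.par q p) k (Proc.par q p') := by
  induction h with
  | zero p => exact NSteps.zero _
  | succ hs _ ih => exact NSteps.succ (Step.parR _ hs) ih

theorem nsteps_parL {p p' : Proc A} (q : Proc A) {k : ℕ} (h : NSteps p k p') :
    NSteps (Proc.par p q) k (Proc.par p' q) := by
  induction h with
  | zero p => exact NSteps.zero _
  | succ hs _ ih => exact NSteps.succ (Step.parL _ hs) ih

theorem nsteps_trans {p q r : Proc A} {k l : ℕ} (h : NSteps p k q) (h' : NSteps q l r) :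
    ∃ m, NSteps p m r := by
  induction h with
  | zero p => exact ⟨_, h'⟩
  | succ hs _ ih =>
    obtain ⟨m, hm⟩ := ih h'
    exact ⟨m + 1, NSteps.succ hs hm⟩

theorem run_to_nil : ∀ n (F : Proc A), F.IsFin → F.size = n →
    ∃ F', NSteps F n F' ∧ F'.IsFin ∧ F'.size = 0 := by
  intro n
  induction n with
  | zero => intro F hF h0; exact ⟨F, NSteps.zero _, hF, h0⟩
  | succ n ih =>
    intro F hF h0
    obtain ⟨a, F1, hs⟩ := ex_step hF (by omega)
    obtain ⟨h1, h2⟩ := step_fin hF hs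
    obtain ⟨F', h3, h4⟩ := ih F1 h1 (by omega)
    exact ⟨F', NSteps.succ hs h3, h4⟩

theorem clean_size_le {S F G : Proc A} (hS : ReplOnly S) (hseed : IsSeed S) (hF : Clean S F)
    (hG : Clean S G) (e : Eqv S F G) : G.size ≤ F.size := by
  obtain ⟨F', h1, h2, h3⟩ := run_to_nil _ F hF.fin rfl
  exact dist_ge hS hseed (nsteps_parR S h1) G hG e (Eqv.of_bisim (bisim_nil_of_size h2 h3))

theorem clean_cancel {S F G : Proc A} (hS : ReplOnly S) (hseed : IsSeed S) (hF : Clean S F)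
    (hG : Clean S G) (e : Eqv S F G) : Bisim F G := by
  have main : ∀ F G, Clean S F → Clean S G → Eqv S F G → ∀ a F', Step F a F' →
      ∃ G', Step G a G' ∧ Clean S F' ∧ Clean S G' ∧ Eqv S F' G' := by
    intro F G hF hG e a F' hs
    rcases e.step hS hs with ⟨G', h1, h2⟩ | ⟨H, h1, h2⟩
    · exact ⟨G', h1, hF.step hs, hG.step h1, h2⟩
    · have h3 := clean_size_le hS hseed (G := Proc.par G H) (hF.step hs)
        ⟨hG, topRepl_clean hS hseed h1⟩ h2
      have h4 := clean_size_le hS hseed hG hF e.symm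
      have h5 := (step_fin hF.fin hs).2
      simp only [Proc.size] at h3
      omega
  refine bisim_of (fun F G => Clean S F ∧ Clean S G ∧ Eqv S F G) ?_ ?_ ⟨hF, hG, e⟩
  · rintro F G ⟨hF, hG, e⟩ a F' hs
    exact main F G hF hG e a F' hs
  · rintro F G ⟨hF, hG, e⟩ a G' hs
    obtain ⟨F', h1, h2, h3, h4⟩ := main G F hG hF e.symm a G' hs
    exact ⟨F', h1, h3, h2, h4.symm⟩

theorem eqD_nil_of_size {p : Proc A} (hp : p.IsFin) (h0 : p.size = 0) : EqD p Proc.nil := by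
  induction p with
  | nil => exact EqD.refl _
  | pre a p => exact absurd h0 (by simp [Proc.size])
  | par p q ihp ihq =>
    simp only [Proc.size] at h0
    exact (EqD.congPar (ihp hp.1 (by omega)) (ihq hp.2 (by omega))).trans (EqD.parNil _)
  | repl => exact absurd hp (by simp [Proc.IsFin])

theorem find_absorbed {S F : Proc A} (hF : F.IsFin) (h : ¬ Clean S F) :
    ∃ a G k, Clean S G ∧ Eqv S (Proc.pre a G) Proc.nil ∧ Reduct F k (Proc.pre a G) := by
  induction F with
  | nil => exact absurd trivial h
  | pre a p ih =>
    by_cases hp : Clean S p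
    · have e : Eqv S (Proc.pre a p) Proc.nil := by
        by_contra hc
        exact h ⟨hc, hp⟩
      exact ⟨a, p, 0, hp, e, _, NSteps.zero _, EqD.refl _⟩
    · obtain ⟨b, G, k, h1, h2, p', h3, h4⟩ := ih hF hp
      exact ⟨b, G, k + 1, h1, h2, p', NSteps.succ Step.pre h3, h4⟩
  | par p q ihp ihq =>
    by_cases hp : Clean S p
    · obtain ⟨b, G, k, h1, h2, q', h3, h4⟩ := ihq hF.2 fun hc => h ⟨hp, hc⟩
      obtain ⟨p', h5, h6, h7⟩ := run_to_nil _ p hF.1 rfl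
      obtain ⟨m, hm⟩ := nsteps_trans (nsteps_parL q h5) (nsteps_parR p' h3)
      exact ⟨b, G, m, h1, h2, _, hm,
        (EqD.congPar (eqD_nil_of_size h6 h7) h4).trans (EqD.nilPar _)⟩
    · obtain ⟨b, G, k, h1, h2, p', h3, h4⟩ := ihp hF.1 hp
      obtain ⟨q', h5, h6, h7⟩ := run_to_nil _ q hF.2 rfl
      obtain ⟨m, hm⟩ := nsteps_trans (nsteps_parL q h3) (nsteps_parR p' h5)
      exact ⟨b, G, m, h1, h2, _, hm,
        (EqD.congPar h4 (eqD_nil_of_size h6 h7)).trans (EqD.parNil _)⟩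
  | repl => exact absurd hF (by simp [Proc.IsFin])

theorem clean_of_dis {S F : Proc A} (hS : ReplOnly S) (hseed : IsSeed S) (hF : F.IsFin)
    (hd : Dis S F) : Clean S F := by
  by_contra hc
  obtain ⟨a, G, k, h1, h2, p', h3, h4⟩ := find_absorbed hF hc
  rcases h2.step hS Step.pre with ⟨_, h5, -⟩ | ⟨H, h5, h6⟩
  · exact absurd h5 step_nil
  · have e : Eqv S G H := h6.trans (Eqv.of_bisim (bisim_nilL H))
    have hH := topRepl_clean hS hseed h5
    have hb := clean_cancel hS hseed h1 hH e
    have hD := eqD_of_bisim _ G H le_rfl h1.fin hH.fin hb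
    exact hd a H h5 k ⟨p', h3, h4.trans (EqD.congPre a hD)⟩

end CCS

/-- If `S | F₁ ~ S | F₂` and `S ⫫ Fᵢ` (`i = 1,2`), then `F₁ ~ F₂`. -/
theorem cancel_F_F {A : Type} [Countable A]
    (S F₁ F₂ : CCS.Proc A) (hS : CCS.ReplOnly S) (hseed : CCS.IsSeed S)
    (hF₁ : F₁.IsFin) (hF₂ : F₂.IsFin)
    (h : CCS.Bisim (CCS.Proc.par S F₁) (CCS.Proc.par S F₂))
    (hd₁ : CCS.Dis S F₁) (hd₂ : CCS.Dis S F₂) :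
    CCS.Bisim F₁ F₂ := by
  exact CCS.clean_cancel hS hseed (CCS.clean_of_dis hS hseed hF₁ hd₁)
    (CCS.clean_of_dis hS hseed hF₂ hd₂) h
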